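/- arXiv:2010.12103 — 3 statements merged into one kernel-verified Lean document; each statement's English description precedes it below -/
import Mathlib

section
/- Fix a sample S = (s_1,…,s_m). Let σ be an n×m random matrix whose entries σ_{j,i} are independent uniform Rademacher (±1) random variables. Then for every ε > 0, Pr_σ( R̂(F,S) ≥ R̂ⁿ_m(F,S,σ) + ε ) ≤ exp( − n m ε² / (2 z²) ). -/
/-!
The bounded-differences (McDiarmid) inequality on the discrete cube, via the exponential moment
method. Flipping one sign `σ_{j,i}` changes `n m R̂ⁿ_m(F,S,σ)` by at most `2z`, that is,
`R̂ⁿ_m(F,S,·)` is `z/(n m)`-Lipschitz for the distance `∑ |σ_{j,i} - τ_{j,i}|`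
(`mcera_le_mcera_add`).

For a function `h` on the cube `{±1}^N` that is `L`-Lipschitz for this distance, integrating out
one coordinate at a time and using
`(eˣ + eʸ)/2 = e^{(x+y)/2} cosh((x-y)/2) ≤ e^{(x+y)/2} e^{L²/2}` for `|x - y| ≤ 2L`
gives `E e^h ≤ exp(E h + N L²/2)` (`sum_exp_le_cube`). Applied to `h = -(n m ε/z²) R̂ⁿ_m`, for which
`L = ε/z`, the Chernoff bound yields the exponent `-n m ε²/z² + n m ε²/(2z²)`.
-/

open MeasureTheory

noncomputable section

/-- Map a Boolean to a `±1` sign: `true ↦ 1`, `false ↦ -1`. -/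
def sgnB (x : Bool) : ℝ := if x then 1 else -1

/-- The `n`-Monte-Carlo Empirical Rademacher Average
`R̂ⁿ_m(F,S,σ) = (1/n) Σ_j sup_{f∈F} (1/m) Σ_i σ_{j,i} f(s_i)`. -/
def mcera {X ι : Type*} (f : ι → X → ℝ) (n m : ℕ) (S : Fin m → X)
    (σ : Fin n → Fin m → Bool) : ℝ :=
  (n : ℝ)⁻¹ * ∑ j : Fin n, ⨆ l : ι, (m : ℝ)⁻¹ * ∑ k : Fin m, sgnB (σ j k) * f l (S k)

/-- Uniform measure on `n × m` sign matrices: the entries are independent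
uniform Rademacher (±1) random variables. -/
def radMeasure (n m : ℕ) : Measure (Fin n → Fin m → Bool) :=
  (PMF.uniformOfFintype (Fin n → Fin m → Bool)).toMeasure

/-- The Empirical Rademacher Average `R̂(F,S) = E_σ[R̂ⁿ_m(F,S,σ)]`. -/
def era {X ι : Type*} (f : ι → X → ℝ) (n m : ℕ) (S : Fin m → X) : ℝ :=
  ∫ σ, mcera f n m S σ ∂(radMeasure n m)

/-- The Rademacher Complexity `R(F,m) = E_S[R̂(F,S)]`, `S` being `m` i.i.d. samples. -/
def rc {X ι : Type*} [MeasurableSpace X] (f : ι → X → ℝ) (n m : ℕ) (μ : Measure X) : ℝ :=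
  ∫ S : Fin m → X, era f n m S ∂(Measure.pi fun _ : Fin m => μ)

/-- `ẑ(S) = sup_{f∈F, 1≤i≤m} |f(s_i)|`. -/
def zhat {X ι : Type*} (f : ι → X → ℝ) {m : ℕ} (S : Fin m → X) : ℝ :=
  ⨆ p : ι × Fin m, |f p.1 (S p.2)|

/-- `ν̂_F(S) = (1/m) sup_{f∈F} Σ_i |f(s_i)|`. -/
def nuhat {X ι : Type*} (f : ι → X → ℝ) {m : ℕ} (S : Fin m → X) : ℝ :=
  (m : ℝ)⁻¹ * ⨆ l : ι, ∑ k : Fin m, |f l (S k)|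

/-- The empirical wimpy variance `σ̂²_F(S) = (1/m) sup_{f∈F} Σ_i f(s_i)²`. -/
def sigma2hat {X ι : Type*} (f : ι → X → ℝ) {m : ℕ} (S : Fin m → X) : ℝ :=
  (m : ℝ)⁻¹ * ⨆ l : ι, ∑ k : Fin m, (f l (S k)) ^ 2

/-- The wimpy variance `σ²_F = sup_{f∈F} E_μ[f²]`. -/
def wimpyVar {X ι : Type*} [MeasurableSpace X] (f : ι → X → ℝ) (μ : Measure X) : ℝ :=
  ⨆ l : ι, ∫ x, (f l x) ^ 2 ∂μ

/-- The positive supremum deviation `SD⁺(F,S) = sup_{f∈F} ((1/m)Σ_i f(s_i) - E_μ[f])`. -/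
def sdPlus {X ι : Type*} [MeasurableSpace X] (f : ι → X → ℝ) (μ : Measure X)
    {m : ℕ} (S : Fin m → X) : ℝ :=
  ⨆ l : ι, ((m : ℝ)⁻¹ * ∑ k : Fin m, f l (S k) - ∫ x, f l x ∂μ)

/-- The negative supremum deviation `SD⁻(F,S) = sup_{f∈F} (E_μ[f] - (1/m)Σ_i f(s_i))`. -/
def sdMinus {X ι : Type*} [MeasurableSpace X] (f : ι → X → ℝ) (μ : Measure X)
    {m : ℕ} (S : Fin m → X) : ℝ :=
  ⨆ l : ι, ((∫ x, f l x ∂μ) - (m : ℝ)⁻¹ * ∑ k : Fin m, f l (S k))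

/-- `η_F = sup_{f∈F} E_μ[f] - a`. -/
def etaF {X ι : Type*} [MeasurableSpace X] (f : ι → X → ℝ) (μ : Measure X) (a : ℝ) : ℝ :=
  (⨆ l : ι, ∫ x, f l x ∂μ) - a

/-- `γ_F = b - inf_{f∈F} E_μ[f]`. -/
def gammaF {X ι : Type*} [MeasurableSpace X] (f : ι → X → ℝ) (μ : Measure X) (b : ℝ) : ℝ :=
  b - ⨅ l : ι, ∫ x, f l x ∂μ

/-- `η̂_F(S) = sup_{f∈F} (1/m) Σ_i f(s_i) - a`. -/
def etahat {X ι : Type*} (f : ι → X → ℝ) {m : ℕ} (S : Fin m → X) (a : ℝ) : ℝ :=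
  (⨆ l : ι, (m : ℝ)⁻¹ * ∑ k : Fin m, f l (S k)) - a

/-- `γ̂_F(S) = b - sup_{f∈F} (1/m) Σ_i f(s_i)`. -/
def gammahat {X ι : Type*} (f : ι → X → ℝ) {m : ℕ} (S : Fin m → X) (b : ℝ) : ℝ :=
  b - ⨆ l : ι, (m : ℝ)⁻¹ * ∑ k : Fin m, f l (S k)

/-- `h(x) = (1+x) ln(1+x) - x`. -/
def hfun (x : ℝ) : ℝ := (1 + x) * Real.log (1 + x) - x

/-- `g(σ) = n m R̂ⁿ_m(F,S,σ) = Σ_j sup_{f∈F} Σ_i σ_{j,i} f(s_i)`. -/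
def gup {X ι : Type*} (f : ι → X → ℝ) {n m : ℕ} (S : Fin m → X)
    (σ : Fin n → Fin m → Bool) : ℝ :=
  ∑ j : Fin n, ⨆ l : ι, ∑ k : Fin m, sgnB (σ j k) * f l (S k)

/-- `g_{j,i}(σ)`: infimum over `σ'_{j,i} ∈ {-1,1}` of `g` evaluated at `σ` with its
`(j,i)` entry replaced by `σ'_{j,i}`. -/
def gji {X ι : Type*} (f : ι → X → ℝ) {n m : ℕ} (S : Fin m → X)
    (σ : Fin n → Fin m → Bool) (j : Fin n) (i : Fin m) : ℝ :=
  min (gup f S (Function.update σ j (Function.update (σ j) i true)))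
      (gup f S (Function.update σ j (Function.update (σ j) i false)))

/-- `g(S) = m SD⁺(F,S) = sup_{f∈F} (Σ_i f(s_i) - m E_μ[f])`. -/
def gSDp {X ι : Type*} [MeasurableSpace X] (f : ι → X → ℝ) (μ : Measure X)
    {m : ℕ} (S : Fin m → X) : ℝ :=
  ⨆ l : ι, (∑ k : Fin m, f l (S k) - m * ∫ x, f l x ∂μ)

/-- `g_i(S) = inf_{s'_i ∈ X} g(s_1,…,s_{i-1},s'_i,s_{i+1},…,s_m)` for `g = m SD⁺`. -/
def gSDpi {X ι : Type*} [MeasurableSpace X] (f : ι → X → ℝ) (μ : Measure X)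
    {m : ℕ} (S : Fin m → X) (i : Fin m) : ℝ :=
  ⨅ s' : X, gSDp f μ (Function.update S i s')

/-- `g(S) = m SD⁻(F,S) = sup_{f∈F} (m E_μ[f] - Σ_i f(s_i))`. -/
def gSDm {X ι : Type*} [MeasurableSpace X] (f : ι → X → ℝ) (μ : Measure X)
    {m : ℕ} (S : Fin m → X) : ℝ :=
  ⨆ l : ι, ((m : ℝ) * (∫ x, f l x ∂μ) - ∑ k : Fin m, f l (S k))

/-- `g_i(S) = inf_{s'_i ∈ X} g(s_1,…,s_{i-1},s'_i,s_{i+1},…,s_m)` for `g = m SD⁻`. -/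
def gSDmi {X ι : Type*} [MeasurableSpace X] (f : ι → X → ℝ) (μ : Measure X)
    {m : ℕ} (S : Fin m → X) (i : Fin m) : ℝ :=
  ⨅ s' : X, gSDm f μ (Function.update S i s')

/-- `g(S) = m σ̂²_F(S) = sup_{f∈F} Σ_i f(s_i)²`. -/
def gWv {X ι : Type*} (f : ι → X → ℝ) {m : ℕ} (S : Fin m → X) : ℝ :=
  ⨆ l : ι, ∑ k : Fin m, (f l (S k)) ^ 2

/-- `g_j(S) = sup_{f∈F} Σ_{i≠j} f(s_i)²`. -/
def gWvj {X ι : Type*} (f : ι → X → ℝ) {m : ℕ} (S : Fin m → X) (j : Fin m) : ℝ :=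
  ⨆ l : ι, ∑ k ∈ Finset.univ.erase j, (f l (S k)) ^ 2


/-- Two-point Hoeffding bound. -/
lemma exp_add_exp_le {x y L : ℝ} (h : |x - y| ≤ 2 * L) :
    Real.exp x + Real.exp y ≤ 2 * Real.exp ((x + y) / 2 + L ^ 2 / 2) := by
  have h1 : Real.exp x + Real.exp y
      = 2 * (Real.exp ((x + y) / 2) * Real.cosh ((x - y) / 2)) := by
    rw [Real.cosh_eq]
    have e1 : x = (x + y) / 2 + (x - y) / 2 := by ring
    have e2 : y = (x + y) / 2 + -((x - y) / 2) := by ring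
    conv_lhs => rw [e1, e2, Real.exp_add, Real.exp_add]
    ring_nf
  rw [h1, Real.exp_add]
  have h2 : Real.cosh ((x - y) / 2) ≤ Real.exp (L ^ 2 / 2) := by
    refine (Real.cosh_le_exp_half_sq _).trans (Real.exp_le_exp.mpr ?_)
    have h3 : ((x - y) / 2) ^ 2 ≤ L ^ 2 := by
      apply sq_le_sq'
      · linarith [neg_abs_le (x - y)]
      · linarith [le_abs_self (x - y)]
    linarith
  gcongr

/-- Splitting off the first coordinate of a sum over the cube. -/
lemma sum_cube_succ {N : ℕ} (F : (Fin (N + 1) → Bool) → ℝ) :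
    ∑ σ, F σ = ∑ σ : Fin N → Bool,
      (F (Fin.cons true σ : Fin (N + 1) → Bool) + F (Fin.cons false σ : Fin (N + 1) → Bool)) := by
  rw [← (Fin.consEquiv (fun _ : Fin (N + 1) => Bool)).sum_comp F, Fintype.sum_prod_type,
    Fintype.sum_bool, ← Finset.sum_add_distrib]
  rfl

/-- Exponential moment of a Lipschitz function on the cube, written with unnormalized sums. -/
lemma sum_exp_le_cube (L : ℝ) (N : ℕ) (h : (Fin N → Bool) → ℝ)
    (hL : ∀ σ τ, h σ ≤ h τ + L * ∑ i, |sgnB (σ i) - sgnB (τ i)|) :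
    ∑ σ, Real.exp (h σ) ≤ 2 ^ N * Real.exp ((∑ σ, h σ) / 2 ^ N + N * L ^ 2 / 2) := by
  induction N with
  | zero => simp
  | succ N ih =>
    -- `u` averages `h` over the first coordinate and inherits the Lipschitz property.
    let u : (Fin N → Bool) → ℝ := fun σ =>
      (h (Fin.cons true σ : Fin (N + 1) → Bool) + h (Fin.cons false σ : Fin (N + 1) → Bool)) / 2
    have hu : ∀ σ τ, u σ ≤ u τ + L * ∑ i, |sgnB (σ i) - sgnB (τ i)| := by
      intro σ τ
      have h1 := hL (Fin.cons true σ : Fin (N + 1) → Bool) (Fin.cons true τ : Fin (N + 1) → Bool)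
      have h2 := hL (Fin.cons false σ : Fin (N + 1) → Bool) (Fin.cons false τ : Fin (N + 1) → Bool)
      simp only [Fin.sum_univ_succ, Fin.cons_zero, Fin.cons_succ, sub_self, abs_zero,
        zero_add] at h1 h2
      simp only [u]
      linarith
    have hstep : ∀ σ : Fin N → Bool,
        Real.exp (h (Fin.cons true σ : Fin (N + 1) → Bool))
          + Real.exp (h (Fin.cons false σ : Fin (N + 1) → Bool))
          ≤ 2 * Real.exp (L ^ 2 / 2) * Real.exp (u σ) := by
      intro σ
      have h1 := hL (Fin.cons true σ : Fin (N + 1) → Bool) (Fin.cons false σ : Fin (N + 1) → Bool)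
      have h2 := hL (Fin.cons false σ : Fin (N + 1) → Bool) (Fin.cons true σ : Fin (N + 1) → Bool)
      simp only [Fin.sum_univ_succ, Fin.cons_zero, Fin.cons_succ, sub_self, abs_zero,
        Finset.sum_const_zero, add_zero, sgnB] at h1 h2
      norm_num at h1 h2
      have h3 := exp_add_exp_le (x := h (Fin.cons true σ : Fin (N + 1) → Bool))
        (y := h (Fin.cons false σ : Fin (N + 1) → Bool)) (L := L)
        (abs_le.mpr ⟨by linarith, by linarith⟩)
      rw [Real.exp_add] at h3
      simp only [u]
      linarith
    have hsum : ∑ σ, h σ = 2 * ∑ σ, u σ := by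
      rw [sum_cube_succ, Finset.mul_sum]
      exact Finset.sum_congr rfl fun σ _ => by simp only [u]; ring
    rw [sum_cube_succ, hsum]
    calc _ ≤ ∑ σ, 2 * Real.exp (L ^ 2 / 2) * Real.exp (u σ) :=
          Finset.sum_le_sum fun σ _ => hstep σ
      _ = 2 * Real.exp (L ^ 2 / 2) * ∑ σ, Real.exp (u σ) := by rw [Finset.mul_sum]
      _ ≤ 2 * Real.exp (L ^ 2 / 2) *
            (2 ^ N * Real.exp ((∑ σ, u σ) / 2 ^ N + N * L ^ 2 / 2)) := by
          gcongr
          exact ih u hu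
      _ = 2 ^ (N + 1) * (Real.exp (L ^ 2 / 2) *
            Real.exp ((∑ σ, u σ) / 2 ^ N + N * L ^ 2 / 2)) := by ring
      _ = _ := by
          rw [← Real.exp_add]
          congr 2
          push_cast
          field_simp
          ring

/-- `sum_exp_le_cube` for functions of a sign matrix. -/
lemma sum_exp_le_matrix (L : ℝ) (n m : ℕ) (h : (Fin n → Fin m → Bool) → ℝ)
    (hL : ∀ σ τ, h σ ≤ h τ + L * ∑ j, ∑ k, |sgnB (σ j k) - sgnB (τ j k)|) :
    ∑ σ, Real.exp (h σ) ≤ 2 ^ (n * m) *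
      Real.exp ((∑ σ, h σ) / 2 ^ (n * m) + (n * m : ℝ) * L ^ 2 / 2) := by
  let e : (Fin (n * m) → Bool) ≃ (Fin n → Fin m → Bool) :=
    (Equiv.arrowCongr finProdFinEquiv.symm (Equiv.refl Bool)).trans (Equiv.curry _ _ _)
  have key := sum_exp_le_cube L (n * m) (fun σ => h (e σ)) (by
    intro σ τ
    refine (hL (e σ) (e τ)).trans (le_of_eq ?_)
    rw [← finProdFinEquiv.sum_comp, Fintype.sum_prod_type]
    rfl)
  rw [e.sum_comp h, e.sum_comp (fun σ => Real.exp (h σ))] at key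
  exact_mod_cast key

lemma mcera_le_mcera_add {X ι : Type*} [Nonempty ι] (f : ι → X → ℝ) (z : ℝ)
    (hf : ∀ l x, |f l x| ≤ z) (n m : ℕ) (S : Fin m → X) (σ τ : Fin n → Fin m → Bool) :
    mcera f n m S σ ≤ mcera f n m S τ
      + z / (n * m) * ∑ j, ∑ k, |sgnB (σ j k) - sgnB (τ j k)| := by
  have hsgn : ∀ x, |sgnB x| = 1 := by intro x; cases x <;> simp [sgnB]
  have hbdd : ∀ ρ : Fin m → Bool, BddAbove (Set.range fun l : ι =>
      (m : ℝ)⁻¹ * ∑ k : Fin m, sgnB (ρ k) * f l (S k)) := by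
    intro ρ
    refine ⟨(m : ℝ)⁻¹ * ∑ k : Fin m, z, ?_⟩
    rintro _ ⟨l, rfl⟩
    dsimp only
    gcongr with k
    calc _ ≤ |sgnB (ρ k) * f l (S k)| := le_abs_self _
      _ = |f l (S k)| := by rw [abs_mul, hsgn, one_mul]
      _ ≤ z := hf _ _
  have hrow : ∀ j, (⨆ l : ι, (m : ℝ)⁻¹ * ∑ k : Fin m, sgnB (σ j k) * f l (S k))
      ≤ (⨆ l : ι, (m : ℝ)⁻¹ * ∑ k : Fin m, sgnB (τ j k) * f l (S k))
        + z / m * ∑ k, |sgnB (σ j k) - sgnB (τ j k)| := by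
    intro j
    refine ciSup_le fun l => ?_
    refine le_trans ?_ (add_le_add_left (le_ciSup (hbdd (τ j)) l) _)
    have h1 : ∑ k : Fin m, sgnB (σ j k) * f l (S k) ≤ ∑ k : Fin m, sgnB (τ j k) * f l (S k)
        + z * ∑ k, |sgnB (σ j k) - sgnB (τ j k)| := by
      rw [Finset.mul_sum, ← Finset.sum_add_distrib]
      refine Finset.sum_le_sum fun k _ => ?_
      have h2 : (sgnB (σ j k) - sgnB (τ j k)) * f l (S k)
          ≤ z * |sgnB (σ j k) - sgnB (τ j k)| := by
        calc _ ≤ |(sgnB (σ j k) - sgnB (τ j k)) * f l (S k)| := le_abs_self _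
          _ = |f l (S k)| * |sgnB (σ j k) - sgnB (τ j k)| := by rw [abs_mul, mul_comm]
          _ ≤ _ := by gcongr; exact hf _ _
      linarith
    calc _ ≤ (m : ℝ)⁻¹ * (∑ k : Fin m, sgnB (τ j k) * f l (S k)
        + z * ∑ k, |sgnB (σ j k) - sgnB (τ j k)|) := by gcongr
      _ = _ := by ring
  unfold mcera
  calc _ ≤ (n : ℝ)⁻¹ * ∑ j, ((⨆ l : ι, (m : ℝ)⁻¹ * ∑ k : Fin m, sgnB (τ j k) * f l (S k))
        + z / m * ∑ k, |sgnB (σ j k) - sgnB (τ j k)|) := by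
        gcongr with j
        exact hrow j
    _ = _ := by
        rw [Finset.sum_add_distrib, ← Finset.mul_sum, mul_add, ← mul_assoc]
        congr 2
        rw [div_eq_mul_inv, div_eq_mul_inv, mul_inv]
        ring

lemma integral_radMeasure (n m : ℕ) (F : (Fin n → Fin m → Bool) → ℝ) :
    ∫ σ, F σ ∂(radMeasure n m) = (∑ σ, F σ) / 2 ^ (n * m) := by
  unfold radMeasure
  rw [PMF.integral_eq_sum, Finset.sum_div]
  refine Finset.sum_congr rfl fun σ _ => ?_
  simp [div_eq_inv_mul, ← pow_mul, mul_comm m n]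

theorem stmt_0 {X : Type*} [MeasurableSpace X] {ι : Type*} [Countable ι]
    (f : ι → X → ℝ) (a b : ℝ) (ha : a ≤ 0) (hb : 0 < b)
    (hmeas : ∀ l : ι, Measurable (f l))
    (hrange : ∀ (l : ι) (x : X), f l x ∈ Set.Icc a b)
    (hzero : ∃ l₀ : ι, ∀ x : X, f l₀ x = 0)
    (n m : ℕ) (hn : 0 < n) (hm : 0 < m) (S : Fin m → X) (ε : ℝ) (hε : 0 < ε) :
    (radMeasure n m
        {σ : Fin n → Fin m → Bool | era f n m S ≥ mcera f n m S σ + ε}).toReal ≤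
      Real.exp (-((n : ℝ) * (m : ℝ) * ε ^ 2) / (2 * (max |a| |b|) ^ 2)) := by
  obtain ⟨l₀, -⟩ := hzero
  have : Nonempty ι := ⟨l₀⟩
  set z := max |a| |b| with hz
  have hzpos : 0 < z := lt_max_of_lt_right (abs_pos.mpr hb.ne')
  have hf : ∀ l x, |f l x| ≤ z := fun l x =>
    abs_le_max_abs_abs (hrange l x).1 (hrange l x).2
  have hn' : (0 : ℝ) < n := Nat.cast_pos.mpr hn
  have hm' : (0 : ℝ) < m := Nat.cast_pos.mpr hm
  -- `t` minimizes the Chernoff exponent `-t ε + t² z² / (2 n m)`.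
  set t : ℝ := n * m * ε / z ^ 2 with ht
  have htpos : 0 < t := by positivity
  have hexp := sum_exp_le_matrix (ε / z) n m (fun σ => -t * mcera f n m S σ) (by
    intro σ τ
    have h1 := mul_le_mul_of_nonneg_left (mcera_le_mcera_add f z hf n m S τ σ) htpos.le
    have h2 : t * (z / (n * m)) = ε / z := by
      rw [ht]; field_simp
    rw [mul_add, ← mul_assoc, h2] at h1
    simp only [abs_sub_comm (sgnB (τ _ _))] at h1
    linarith)
  have hera : era f n m S = (∑ σ, mcera f n m S σ) / 2 ^ (n * m) := integral_radMeasure n m _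
  rw [← Finset.mul_sum, mul_div_assoc, ← hera] at hexp
  set E := era f n m S with hE
  have hmeasure : (radMeasure n m {σ | E ≥ mcera f n m S σ + ε}).toReal
      = (∑ σ, Set.indicator {σ | E ≥ mcera f n m S σ + ε} (1 : (Fin n → Fin m → Bool) → ℝ) σ)
          / 2 ^ (n * m) := by
    rw [← integral_radMeasure, integral_indicator_one (Set.toFinite _).measurableSet]
    rfl
  rw [hmeasure, div_le_iff₀ (by positivity)]
  calc _ ≤ ∑ σ, Real.exp (t * (E - ε)) * Real.exp (-t * mcera f n m S σ) := by
        refine Finset.sum_le_sum fun σ _ => ?_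
        rw [← Real.exp_add]
        by_cases hσ : σ ∈ {σ | E ≥ mcera f n m S σ + ε}
        swap
        · rw [Set.indicator_of_notMem hσ]
          positivity
        rw [Set.indicator_of_mem hσ, Pi.one_apply]
        have h1 : mcera f n m S σ + ε ≤ E := hσ
        refine Real.one_le_exp ?_
        nlinarith
    _ = Real.exp (t * (E - ε)) * ∑ σ, Real.exp (-t * mcera f n m S σ) := by
        rw [Finset.mul_sum]
    _ ≤ Real.exp (t * (E - ε)) *
          (2 ^ (n * m) * Real.exp (-t * E + (n * m : ℝ) * (ε / z) ^ 2 / 2)) := by gcongr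
    _ = 2 ^ (n * m) * (Real.exp (t * (E - ε)) *
          Real.exp (-t * E + (n * m : ℝ) * (ε / z) ^ 2 / 2)) := by ring
    _ = _ := by
        rw [← Real.exp_add, mul_comm]
        congr 2
        rw [ht]
        field_simp
        ring
end
end

section
/- Let S = (s_1,…,s_m) be m i.i.d. samples from μ. For all 0 < ε ≤ R(F,m), Pr_S( R(F,m) ≥ R̂(F,S) + ε ) ≤ exp( − (m R(F,m)/c) · h( − ε / R(F,m) ) ) ≤ exp( − m ε² / (2 c R(F,m)) ), where h(x) = (1+x)ln(1+x) − x. -/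
/-!
Put `Z(S) = (m/c) R̂(F,S) = (1/c) E_σ sup_f ∑ₖ σₖ f(sₖ)` and let `Zᵢ` be the same quantity with the
`i`-th point left out. Then `Z` is self-bounding: `0 ≤ Z - Zᵢ ≤ 1` (the lower bound is Jensen's
inequality in the sign `σᵢ`) and `∑ᵢ (Z - Zᵢ) ≤ Z`.

The lower tail of a self-bounding function is controlled by the entropy method. The modified
logarithmic Sobolev inequality `ent_exp_le`, applied to `t Z` and `t Zᵢ`, gives for
`L(t) = log E[exp (t Z)]` the differential inequality `(1 - exp (-t)) L'(t) ≤ L(t)`, which says that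
`L(t) / (exp t - 1)` is nonincreasing on `t < 0`. Its limit at `0` is `E Z`, hence
`L(t) ≤ (exp t - 1) E Z` for `t < 0` (`selfBounding_cgf_le`), and Chernoff's bound with
`t = log (1 - ε/R)` is the first inequality; when `ε = R` one lets `t → -∞` instead.

The second inequality is `h(-u) ≥ u²/2` on `[0,1]`, which reduces to `s ≤ sinh s`.
-/

open MeasureTheory

noncomputable section

/-! ### Bounded measurable functions and entropy on product spaces -/

/-- Bounded measurable real functions: the class in which all integrability
side conditions are automatic on a probability space. -/
def BddMeas {α : Type*} [MeasurableSpace α] (g : α → ℝ) : Prop :=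
  Measurable g ∧ ∃ C : ℝ, ∀ x, |g x| ≤ C

namespace BddMeas

variable {α β : Type*} [MeasurableSpace α] [MeasurableSpace β] {g h : α → ℝ}

lemma integrable (hg : BddMeas g) (μ : Measure α) [IsFiniteMeasure μ] : Integrable g μ := by
  obtain ⟨hm, C, hC⟩ := hg
  exact Integrable.of_bound hm.aestronglyMeasurable C (Filter.Eventually.of_forall hC)

lemma const (c : ℝ) : BddMeas (fun _ : α => c) := ⟨measurable_const, |c|, fun _ => le_rfl⟩

lemma add (hg : BddMeas g) (hh : BddMeas h) : BddMeas (fun x => g x + h x) := by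
  obtain ⟨hm, C, hC⟩ := hg
  obtain ⟨hm', D, hD⟩ := hh
  exact ⟨hm.add hm', C + D, fun x => (abs_add_le _ _).trans (add_le_add (hC x) (hD x))⟩

lemma mul (hg : BddMeas g) (hh : BddMeas h) : BddMeas (fun x => g x * h x) := by
  obtain ⟨hm, C, hC⟩ := hg
  obtain ⟨hm', D, hD⟩ := hh
  refine ⟨hm.mul hm', C * D, fun x => ?_⟩
  rw [abs_mul]
  exact mul_le_mul (hC x) (hD x) (abs_nonneg _) ((abs_nonneg _).trans (hC x))

lemma sub (hg : BddMeas g) (hh : BddMeas h) : BddMeas (fun x => g x - h x) := by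
  simpa [sub_eq_add_neg] using hg.add ((const (-1)).mul hh)

lemma exp (hg : BddMeas g) : BddMeas (fun x => Real.exp (g x)) := by
  obtain ⟨hm, C, hC⟩ := hg
  refine ⟨hm.exp, Real.exp C, fun x => ?_⟩
  rw [abs_of_pos (Real.exp_pos _)]
  exact Real.exp_le_exp.2 ((le_abs_self _).trans (hC x))

lemma comp (hg : BddMeas g) {u : β → α} (hu : Measurable u) : BddMeas (fun x => g (u x)) := by
  obtain ⟨hm, C, hC⟩ := hg
  exact ⟨hm.comp hu, C, fun x => hC _⟩

lemma integral_right {g : α × β → ℝ} (hg : BddMeas g) (π : Measure β) [IsProbabilityMeasure π] :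
    BddMeas (fun x => ∫ y, g (x, y) ∂π) := by
  obtain ⟨hm, C, hC⟩ := hg
  refine ⟨(hm.stronglyMeasurable.integral_prod_right' (ν := π)).measurable, C, fun x => ?_⟩
  have := norm_integral_le_of_norm_le_const (μ := π) (f := fun y => g (x, y)) (C := C)
    (Filter.Eventually.of_forall fun y => hC (x, y))
  simpa using this

/-- The logarithm of a partial average of `exp g` obeys the bound of `g`. -/
lemma log_integral_exp {g : α × β → ℝ} (hg : BddMeas g) (π : Measure β)
    [IsProbabilityMeasure π] :
    BddMeas (fun x => Real.log (∫ y, Real.exp (g (x, y)) ∂π)) := by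
  have hG := (hg.exp.integral_right π).1
  have hi : ∀ x, Integrable (fun y => Real.exp (g (x, y))) π := fun x =>
    (hg.exp.comp measurable_prodMk_left).integrable π
  obtain ⟨hm, C, hC⟩ := hg
  refine ⟨hG.log, C, fun x => ?_⟩
  have h1 : Real.exp (-C) ≤ ∫ y, Real.exp (g (x, y)) ∂π := by
    have := integral_mono (integrable_const (μ := π) (Real.exp (-C))) (hi x)
      (fun y => Real.exp_le_exp.2 (abs_le.1 (hC (x, y))).1)
    simpa using this
  have h2 : ∫ y, Real.exp (g (x, y)) ∂π ≤ Real.exp C := by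
    have := integral_mono (hi x) (integrable_const (μ := π) (Real.exp C))
      (fun y => Real.exp_le_exp.2 (abs_le.1 (hC (x, y))).2)
    simpa using this
  have hpos := (Real.exp_pos _).trans_le h1
  exact abs_le.2 ⟨(Real.le_log_iff_exp_le hpos).2 h1, (Real.log_le_iff_le_exp hpos).2 h2⟩

end BddMeas

/-- Entropy of a one-variable marginal: if `G x = ∫ exp z(x,·)`, then
`Ent(G) ≤ E[exp z · (z - v) - exp z + exp v]` for every comparison function `v` not depending
on `x`. This is the duality formula for entropy with test function `log (G / E G)`, followed by
the inequality `t + 1 ≤ exp t`. -/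
lemma ent_marginal_le {X Y : Type*} [MeasurableSpace X] [MeasurableSpace Y]
    (μ : Measure X) [IsProbabilityMeasure μ] (π : Measure Y) [IsProbabilityMeasure π]
    {z : X × Y → ℝ} (hz : BddMeas z) {v : Y → ℝ} (hv : BddMeas v) :
    ∫ x, (∫ y, Real.exp (z (x, y)) ∂π) * Real.log (∫ y, Real.exp (z (x, y)) ∂π) ∂μ
      - (∫ p, Real.exp (z p) ∂(μ.prod π)) * Real.log (∫ p, Real.exp (z p) ∂(μ.prod π))
    ≤ ∫ p, (Real.exp (z p) * (z p - v p.2) - Real.exp (z p) + Real.exp (v p.2))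
        ∂(μ.prod π) := by
  set G : X → ℝ := fun x => ∫ y, Real.exp (z (x, y)) ∂π with hGdef
  set A : ℝ := ∫ p, Real.exp (z p) ∂(μ.prod π) with hAdef
  have hG : BddMeas G := hz.exp.integral_right π
  have hlG : BddMeas (fun x => Real.log (G x)) := hz.log_integral_exp π
  have hA : A = ∫ x, G x ∂μ := integral_prod _ (hz.exp.integrable _)
  have hGpos : ∀ x, 0 < G x := fun x =>
    integral_exp_pos ((hz.exp.comp measurable_prodMk_left).integrable π)
  have hApos : 0 < A := integral_exp_pos (hz.exp.integrable _)
  have hv2 : BddMeas (fun p : X × Y => v p.2) := hv.comp measurable_snd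
  have hU : BddMeas (fun p : X × Y => Real.log (G p.1) - Real.log A) :=
    (hlG.comp measurable_fst).sub (.const _)
  have hGA : BddMeas (fun x => G x / A) := by
    simpa [div_eq_mul_inv] using hG.mul (.const A⁻¹)
  have hGA2 : BddMeas (fun p : X × Y => G p.1 / A * Real.exp (v p.2)) :=
    (hGA.comp measurable_fst).mul hv2.exp
  have e1 : ∫ x, G x * Real.log (G x) ∂μ - A * Real.log A
      = ∫ p, Real.exp (z p) * (Real.log (G p.1) - Real.log A) ∂(μ.prod π) := by
    rw [integral_prod _ ((hz.exp.mul hU).integrable _)]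
    simp only [integral_mul_const]
    change _ = ∫ x, G x * (Real.log (G x) - Real.log A) ∂μ
    simp only [mul_sub]
    rw [integral_sub ((hG.mul hlG).integrable _) ((hG.mul (.const _)).integrable _),
      integral_mul_const, ← hA]
  have hI1 : BddMeas (fun p => Real.exp (z p) * (z p - v p.2) - Real.exp (z p)) :=
    (hz.exp.mul (hz.sub hv2)).sub hz.exp
  have e2 : ∫ p, G p.1 / A * Real.exp (v p.2) ∂(μ.prod π)
      = ∫ p : X × Y, Real.exp (v p.2) ∂(μ.prod π) := by
    have h1 := integral_prod_mul (μ := μ) (ν := π) (fun x => G x / A) (fun y => Real.exp (v y))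
    have h2 := integral_prod_mul (μ := μ) (ν := π) (fun _ => (1 : ℝ)) (fun y => Real.exp (v y))
    simp only [one_mul] at h2
    rw [h1, h2, integral_div, ← hA, div_self hApos.ne']
    simp
  rw [e1, integral_add (hI1.integrable _) (hv2.exp.integrable _), ← e2,
    ← integral_add (hI1.integrable _) (hGA2.integrable _)]
  refine integral_mono ((hz.exp.mul hU).integrable _) ((hI1.add hGA2).integrable _) fun p => ?_
  have hexp : G p.1 / A * Real.exp (v p.2)
      = Real.exp (z p) * Real.exp (Real.log (G p.1) - Real.log A + v p.2 - z p) := by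
    rw [← Real.exp_add, show z p + (Real.log (G p.1) - Real.log A + v p.2 - z p)
      = Real.log (G p.1) - Real.log A + v p.2 by ring, Real.exp_add, Real.exp_sub,
      Real.exp_log (hGpos _), Real.exp_log hApos]
  change Real.exp (z p) * (Real.log (G p.1) - Real.log A)
    ≤ Real.exp (z p) * (z p - v p.2) - Real.exp (z p) + G p.1 / A * Real.exp (v p.2)
  rw [hexp]
  have := mul_le_mul_of_nonneg_left
    (Real.add_one_le_exp (Real.log (G p.1) - Real.log A + v p.2 - z p)) (Real.exp_pos (z p)).le
  linarith

lemma integral_pi_succ {X : Type*} [MeasurableSpace X] (μ : Measure X) [IsProbabilityMeasure μ]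
    {m : ℕ} (g : (Fin (m + 1) → X) → ℝ) :
    ∫ S, g S ∂(Measure.pi fun _ : Fin (m + 1) => μ)
      = ∫ p : X × (Fin m → X), g (Fin.cons p.1 p.2)
          ∂(μ.prod (Measure.pi fun _ : Fin m => μ)) := by
  have := ((measurePreserving_piFinSuccAbove (fun _ : Fin (m + 1) => μ) 0).symm)
  rw [← this.integral_comp']
  simp [MeasurableEquiv.piFinSuccAbove_symm_apply, Fin.insertNthEquiv]

/-- Modified logarithmic Sobolev inequality on a product space:
`Ent(exp Z) ≤ ∑ₖ E[exp Z · (Z - Wₖ) - exp Z + exp Wₖ]` whenever `Wₖ` does not depend on the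
`k`-th coordinate. Induction on the number of coordinates, splitting off the first one by the
chain rule for entropy. -/
lemma ent_exp_le {X : Type*} [MeasurableSpace X] (μ : Measure X) [IsProbabilityMeasure μ]
    (m : ℕ) (Z : (Fin m → X) → ℝ) (hZ : BddMeas Z) (W : Fin m → (Fin m → X) → ℝ)
    (hW : ∀ k, BddMeas (W k)) (hWk : ∀ k S x, W k (Function.update S k x) = W k S) :
    ∫ S, Real.exp (Z S) * Z S ∂(Measure.pi fun _ : Fin m => μ)
      - (∫ S, Real.exp (Z S) ∂(Measure.pi fun _ : Fin m => μ))
        * Real.log (∫ S, Real.exp (Z S) ∂(Measure.pi fun _ : Fin m => μ))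
    ≤ ∑ k, ∫ S, (Real.exp (Z S) * (Z S - W k S) - Real.exp (Z S) + Real.exp (W k S))
        ∂(Measure.pi fun _ : Fin m => μ) := by
  induction m with
  | zero =>
    have h : ∀ S, Z S = Z default := fun S => by rw [Subsingleton.elim S default]
    simp [h]
  | succ m ih =>
    simp only [integral_pi_succ]
    set π : Measure (Fin m → X) := Measure.pi fun _ : Fin m => μ with hπ
    have hcons : Measurable (fun p : X × (Fin m → X) => (Fin.cons p.1 p.2 : Fin (m + 1) → X)) := by
      refine measurable_pi_iff.2 fun i => ?_
      refine Fin.cases ?_ (fun j => ?_) i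
      · simpa using measurable_fst
      · simpa using measurable_pi_iff.1 measurable_snd j
    have hz : BddMeas (fun p : X × (Fin m → X) => Z (Fin.cons p.1 p.2)) := hZ.comp hcons
    have hw : ∀ k, BddMeas (fun p : X × (Fin m → X) => W k (Fin.cons p.1 p.2)) :=
      fun k => (hW k).comp hcons
    obtain ⟨x₀⟩ : Nonempty X := μ.nonempty_of_neZero
    have hv : BddMeas (fun y : Fin m → X => W 0 (Fin.cons x₀ y)) :=
      (hw 0).comp (u := fun y => (x₀, y)) measurable_prodMk_left
    have hv0 : ∀ x y, W 0 (Fin.cons x y) = W 0 (Fin.cons x₀ y) := fun x y => by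
      rw [← hWk 0 (Fin.cons x₀ y) x, Fin.update_cons_zero]
    have h1 := ent_marginal_le μ π hz hv
    have hG := hz.exp.integral_right π
    have hlG := hz.log_integral_exp π
    have hT : ∀ k, BddMeas (fun p : X × (Fin m → X) =>
        Real.exp (Z (Fin.cons p.1 p.2)) * (Z (Fin.cons p.1 p.2) - W k (Fin.cons p.1 p.2))
          - Real.exp (Z (Fin.cons p.1 p.2)) + Real.exp (W k (Fin.cons p.1 p.2))) := fun k =>
      ((hz.exp.mul (hz.sub (hw k))).sub hz.exp).add (hw k).exp
    rw [Fin.sum_univ_succ]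
    simp only [hv0]
    -- the remaining coordinates, for each frozen value `x` of the first one
    have h2 : ∀ x, ∫ y, Real.exp (Z (Fin.cons x y)) * Z (Fin.cons x y) ∂π
        - (∫ y, Real.exp (Z (Fin.cons x y)) ∂π) * Real.log (∫ y, Real.exp (Z (Fin.cons x y)) ∂π)
        ≤ ∑ k : Fin m, ∫ y, (Real.exp (Z (Fin.cons x y)) * (Z (Fin.cons x y)
            - W k.succ (Fin.cons x y)) - Real.exp (Z (Fin.cons x y))
            + Real.exp (W k.succ (Fin.cons x y))) ∂π := fun x =>
      ih (fun y => Z (Fin.cons x y)) (hz.comp (u := fun y => (x, y)) measurable_prodMk_left)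
        (fun k y => W k.succ (Fin.cons x y))
        (fun k => (hw k.succ).comp (u := fun y => (x, y)) measurable_prodMk_left)
        (fun k S x' => by rw [Fin.cons_update, hWk])
    have h3 := integral_mono (μ := μ)
      ((((hz.exp.mul hz).integral_right π).sub (hG.mul hlG)).integrable _)
      (integrable_finsetSum _ fun k _ => (((hT k.succ).integral_right π).integrable _)) h2
    rw [integral_sub (((hz.exp.mul hz).integral_right π).integrable _)
      ((hG.mul hlG).integrable _), integral_finsetSum _ fun k _ =>
        (((hT k.succ).integral_right π).integrable _)] at h3
    rw [integral_prod _ ((hz.exp.mul hz).integrable _)]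
    have h4 : ∀ k : Fin m, _ := fun k => integral_prod (μ := μ) (ν := π) _ ((hT k.succ).integrable _)
    simp only [h4]
    linarith

/-! ### Lower tail of self-bounding functions -/

section SelfBounding

variable {X : Type*} [MeasurableSpace X] (μ : Measure X) [IsProbabilityMeasure μ]
  (m : ℕ) (Z : (Fin m → X) → ℝ) (W : Fin m → (Fin m → X) → ℝ)

/-- Entropy bound for a self-bounding function `Z`. Writing `F t = E[exp (t Z)]`, this is the
differential inequality `(1 - exp (-t)) F'(t) ≤ F(t) log F(t)`. -/
lemma selfBounding_ent_le (hZ : BddMeas Z) (hW : ∀ k, BddMeas (W k))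
    (hWk : ∀ k S x, W k (Function.update S k x) = W k S)
    (h0 : ∀ k S, W k S ≤ Z S) (h1 : ∀ k S, Z S - W k S ≤ 1)
    (hsum : ∀ S, ∑ k, (Z S - W k S) ≤ Z S) (t : ℝ) :
    (1 - Real.exp (-t)) * ∫ S, Z S * Real.exp (t * Z S) ∂(Measure.pi fun _ : Fin m => μ)
      ≤ (∫ S, Real.exp (t * Z S) ∂(Measure.pi fun _ : Fin m => μ))
        * Real.log (∫ S, Real.exp (t * Z S) ∂(Measure.pi fun _ : Fin m => μ)) := by
  set P : Measure (Fin m → X) := Measure.pi fun _ : Fin m => μ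
  have htZ : BddMeas (fun S => t * Z S) := (BddMeas.const t).mul hZ
  have htW : ∀ k, BddMeas (fun S => t * W k S) := fun k => (BddMeas.const t).mul (hW k)
  have key := ent_exp_le μ m (fun S => t * Z S) htZ (fun k S => t * W k S) htW
    (fun k S x => by simp only [hWk])
  have hcoef : 0 ≤ Real.exp (-t) + t - 1 := by linarith [Real.add_one_le_exp (-t)]
  have hterm : ∀ k S, Real.exp (t * Z S) * (t * Z S - t * W k S) - Real.exp (t * Z S)
      + Real.exp (t * W k S)
      ≤ (Real.exp (-t) + t - 1) * (Real.exp (t * Z S) * (Z S - W k S)) := by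
    intro k S
    set u := Z S - W k S with hu
    have hu0 : 0 ≤ u := sub_nonneg.2 (h0 k S)
    -- convexity of `exp` on the segment from `0` to `-t`
    have hconv : Real.exp (-t * u) ≤ 1 - u + u * Real.exp (-t) := by
      have := convexOn_exp.2 (Set.mem_univ (0 : ℝ)) (Set.mem_univ (-t))
        (sub_nonneg.2 (h1 k S)) hu0 (by ring)
      simp only [smul_eq_mul, mul_zero, zero_add, Real.exp_zero, mul_one] at this
      rw [mul_comm]
      exact this
    have he : Real.exp (t * W k S) = Real.exp (t * Z S) * Real.exp (-t * u) := by
      rw [← Real.exp_add]; congr 1; rw [hu]; ring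
    rw [he]
    have := mul_le_mul_of_nonneg_left hconv (Real.exp_pos (t * Z S)).le
    have hd : t * Z S - t * W k S = t * u := by rw [hu]; ring
    rw [hd]
    linarith
  have hbd : ∀ k, BddMeas (fun S => (Real.exp (-t) + t - 1)
      * (Real.exp (t * Z S) * (Z S - W k S))) := fun k =>
    (BddMeas.const _).mul (htZ.exp.mul (hZ.sub (hW k)))
  have hb2 : BddMeas (fun S => (Real.exp (-t) + t - 1) * (Z S * Real.exp (t * Z S))) :=
    (BddMeas.const _).mul (hZ.mul htZ.exp)
  have hle : ∑ k, ∫ S, (Real.exp (t * Z S) * (t * Z S - t * W k S) - Real.exp (t * Z S)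
      + Real.exp (t * W k S)) ∂P
      ≤ (Real.exp (-t) + t - 1) * ∫ S, Z S * Real.exp (t * Z S) ∂P := by
    calc _ ≤ ∑ k, ∫ S, (Real.exp (-t) + t - 1) * (Real.exp (t * Z S) * (Z S - W k S)) ∂P := by
          refine Finset.sum_le_sum fun k _ => integral_mono ?_ ((hbd k).integrable _) (hterm k)
          exact (((htZ.exp.mul (htZ.sub (htW k))).sub htZ.exp).add (htW k).exp).integrable _
      _ = ∫ S, ∑ k, (Real.exp (-t) + t - 1) * (Real.exp (t * Z S) * (Z S - W k S)) ∂P :=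
          (integral_finsetSum _ fun k _ => (hbd k).integrable _).symm
      _ ≤ ∫ S, (Real.exp (-t) + t - 1) * (Z S * Real.exp (t * Z S)) ∂P := by
          refine integral_mono (integrable_finsetSum _ fun k _ => (hbd k).integrable _)
            (hb2.integrable _) fun S => ?_
          simp only [← Finset.mul_sum]
          refine mul_le_mul_of_nonneg_left ?_ hcoef
          rw [mul_comm (Z S)]
          exact mul_le_mul_of_nonneg_left (hsum S) (Real.exp_pos _).le
      _ = _ := integral_const_mul _ _
  have hL : ∫ S, Real.exp (t * Z S) * (t * Z S) ∂P
      = t * ∫ S, Z S * Real.exp (t * Z S) ∂P := by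
    rw [← integral_const_mul]
    exact integral_congr_ae (Filter.Eventually.of_forall fun S => by ring)
  rw [hL] at key
  linarith

/-- On the negative half-line a self-bounding function has log-Laplace transform at most that of a
Poisson variable with the same mean. -/
lemma selfBounding_cgf_le (hZ : BddMeas Z) (hW : ∀ k, BddMeas (W k))
    (hWk : ∀ k S x, W k (Function.update S k x) = W k S)
    (h0 : ∀ k S, W k S ≤ Z S) (h1 : ∀ k S, Z S - W k S ≤ 1)
    (hsum : ∀ S, ∑ k, (Z S - W k S) ≤ Z S) {t : ℝ} (ht : t < 0) :
    ProbabilityTheory.cgf Z (Measure.pi fun _ : Fin m => μ) t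
      ≤ (Real.exp t - 1) * ∫ S, Z S ∂(Measure.pi fun _ : Fin m => μ) := by
  have hent := selfBounding_ent_le μ m Z W hZ hW hWk h0 h1 hsum
  set P : Measure (Fin m → X) := Measure.pi fun _ : Fin m => μ
  have hint : ∀ s, Integrable (fun S => Real.exp (s * Z S)) P := fun s =>
    ((BddMeas.const s).mul hZ).exp.integrable P
  have hset : ∀ s, s ∈ interior (ProbabilityTheory.integrableExpSet Z P) := by
    have : ProbabilityTheory.integrableExpSet Z P = Set.univ := Set.eq_univ_of_forall hint
    simp [this]
  have hFpos : ∀ s, 0 < ProbabilityTheory.mgf Z P s := fun s =>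
    ProbabilityTheory.mgf_pos (hint s)
  have hL : ∀ s, HasDerivAt (ProbabilityTheory.cgf Z P)
      ((∫ S, Z S * Real.exp (s * Z S) ∂P) / ProbabilityTheory.mgf Z P s) s := fun s =>
    (ProbabilityTheory.hasDerivAt_mgf (hset s)).log (hFpos s).ne'
  have hE : ∀ s, HasDerivAt (fun s => Real.exp s - 1) (Real.exp s) s := fun s =>
    (Real.hasDerivAt_exp s).sub_const 1
  have hneg : ∀ s : ℝ, s < 0 → Real.exp s - 1 < 0 := fun s hs =>
    sub_neg.2 (by simpa using hs)
  have hK : ∀ s : ℝ, s < 0 → HasDerivAt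
      (fun s => ProbabilityTheory.cgf Z P s / (Real.exp s - 1))
      (((∫ S, Z S * Real.exp (s * Z S) ∂P) / ProbabilityTheory.mgf Z P s * (Real.exp s - 1)
        - ProbabilityTheory.cgf Z P s * Real.exp s) / (Real.exp s - 1) ^ 2) s := fun s hs =>
    (hL s).div (hE s) (hneg s hs).ne
  have hanti : AntitoneOn (fun s => ProbabilityTheory.cgf Z P s / (Real.exp s - 1))
      (Set.Iio 0) := by
    refine antitoneOn_of_deriv_nonpos (convex_Iio 0)
      (fun s hs => (hK s hs).continuousAt.continuousWithinAt) ?_ ?_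
    · rw [interior_Iio]
      exact fun s hs => (hK s hs).differentiableAt.differentiableWithinAt
    · rw [interior_Iio]
      intro s hs
      rw [(hK s hs).deriv]
      refine div_nonpos_of_nonpos_of_nonneg ?_ (sq_nonneg _)
      have h2 : (1 - Real.exp (-s)) * ∫ S, Z S * Real.exp (s * Z S) ∂P
          ≤ ProbabilityTheory.mgf Z P s * ProbabilityTheory.cgf Z P s := hent s
      have h3 : (1 - Real.exp (-s)) * ((∫ S, Z S * Real.exp (s * Z S) ∂P)
          / ProbabilityTheory.mgf Z P s) ≤ ProbabilityTheory.cgf Z P s := by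
        rw [← mul_div_assoc, div_le_iff₀ (hFpos s)]
        linarith
      have h4 := mul_le_mul_of_nonneg_right h3 (Real.exp_pos s).le
      have h5 : (1 - Real.exp (-s)) * Real.exp s = Real.exp s - 1 := by
        rw [sub_mul, ← Real.exp_add]; simp
      rw [← h5]
      linarith
  -- the limit of the quotient at `0` is the quotient of the derivatives
  have hlim : Filter.Tendsto (fun s => ProbabilityTheory.cgf Z P s / (Real.exp s - 1))
      (nhdsWithin 0 (Set.Iio 0)) (nhds (∫ S, Z S ∂P)) := by
    have a1 := (hL 0).tendsto_slope
    have a2 := (hE 0).tendsto_slope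
    have a3 := (a1.div a2 (by simp)).mono_left
      (nhdsWithin_mono 0 (fun s (hs : s < 0) => hs.ne : Set.Iio (0 : ℝ) ⊆ {0}ᶜ))
    simp only [zero_mul, Real.exp_zero, mul_one, ProbabilityTheory.mgf_zero, div_one] at a3
    refine a3.congr' ?_
    filter_upwards [self_mem_nhdsWithin] with s hs
    have hs' : s ≠ 0 := (show s < 0 from hs).ne
    have := (hneg s hs).ne
    simp only [Pi.div_apply, slope_def_field, Real.exp_zero, ProbabilityTheory.cgf_zero, sub_zero,
      sub_self]
    field_simp
  have hge : ∫ S, Z S ∂P ≤ ProbabilityTheory.cgf Z P t / (Real.exp t - 1) := by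
    refine le_of_tendsto hlim ?_
    filter_upwards [Ioo_mem_nhdsLT ht] with s hs
    exact hanti ht hs.2 hs.1.le
  rw [le_div_iff_of_neg (hneg t ht)] at hge
  linarith

/-- Lower-tail Bennett inequality for self-bounding functions, at relative deviation `u`. -/
lemma selfBounding_lower_tail (hZ : BddMeas Z) (hW : ∀ k, BddMeas (W k))
    (hWk : ∀ k S x, W k (Function.update S k x) = W k S)
    (h0 : ∀ k S, W k S ≤ Z S) (h1 : ∀ k S, Z S - W k S ≤ 1)
    (hsum : ∀ S, ∑ k, (Z S - W k S) ≤ Z S) {u : ℝ} (hu0 : 0 < u) (hu1 : u ≤ 1) :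
    (Measure.pi fun _ : Fin m => μ).real
        {S | Z S ≤ (∫ S, Z S ∂(Measure.pi fun _ : Fin m => μ)) * (1 - u)}
      ≤ Real.exp (-(∫ S, Z S ∂(Measure.pi fun _ : Fin m => μ)) * hfun (-u)) := by
  have hcgf := fun t (ht : t < 0) => selfBounding_cgf_le μ m Z W hZ hW hWk h0 h1 hsum ht
  set P : Measure (Fin m → X) := Measure.pi fun _ : Fin m => μ
  set E := ∫ S, Z S ∂P
  have hint : ∀ s, Integrable (fun S => Real.exp (s * Z S)) P := fun s =>
    ((BddMeas.const s).mul hZ).exp.integrable P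
  have hch : ∀ t < 0, P.real {S | Z S ≤ E * (1 - u)}
      ≤ Real.exp (-t * (E * (1 - u)) + (Real.exp t - 1) * E) := fun t ht =>
    (ProbabilityTheory.measure_le_le_exp_cgf _ ht.le (hint t)).trans
      (Real.exp_le_exp.2 (by linarith [hcgf t ht]))
  rcases hu1.lt_or_eq with hu | rfl
  · -- the optimal exponent is `t = log (1 - u)`
    have hpos : 0 < 1 - u := by linarith
    refine (hch (Real.log (1 - u)) (Real.log_neg hpos (by linarith))).trans
      (Real.exp_le_exp.2 (le_of_eq ?_))
    rw [Real.exp_log hpos, hfun, ← sub_eq_add_neg]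
    ring
  · -- for `u = 1` the optimal exponent is `-∞`
    have hlim : Filter.Tendsto (fun t : ℝ => Real.exp (-t * (E * (1 - 1)) + (Real.exp t - 1) * E))
        Filter.atBot (nhds (Real.exp (-E * hfun (-1)))) := by
      have : Filter.Tendsto (fun t : ℝ => Real.exp ((Real.exp t - 1) * E))
          Filter.atBot (nhds (Real.exp ((0 - 1) * E))) :=
        (Real.continuous_exp.tendsto _).comp
          ((Real.tendsto_exp_atBot.sub_const 1).mul_const E)
      simpa [hfun] using this
    refine ge_of_tendsto hlim ?_
    filter_upwards [Filter.eventually_lt_atBot 0] with t ht using hch t ht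

end SelfBounding

/-- With `1 - u = exp (-s)` this is `s ≤ sinh s`. -/
lemma sq_div_two_le_hfun_neg {u : ℝ} (hu0 : 0 ≤ u) (hu1 : u ≤ 1) : u ^ 2 / 2 ≤ hfun (-u) := by
  rcases hu1.lt_or_eq with hu | rfl
  · have hpos : 0 < 1 - u := by linarith
    have hs : 0 ≤ -Real.log (1 - u) :=
      neg_nonneg.2 (Real.log_nonpos hpos.le (by linarith))
    have h := Real.self_le_sinh_iff.2 hs
    rw [Real.sinh_eq, neg_neg, Real.exp_neg, Real.exp_log hpos] at h
    have h' := mul_le_mul_of_nonneg_left h hpos.le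
    have e : (1 - u) * (((1 - u)⁻¹ - (1 - u)) / 2) = (1 - (1 - u) ^ 2) / 2 := by
      field_simp
    rw [e] at h'
    rw [hfun, ← sub_eq_add_neg]
    nlinarith
  · norm_num [hfun]

/-! ### The empirical Rademacher average is self-bounding -/

/-- `sup_{f∈F} ∑_{k∈s} θₖ f(sₖ)`: the unnormalized Rademacher supremum over a set `s` of sample
indices, for one sign vector `θ`. -/
def supSum {X ι : Type*} (f : ι → X → ℝ) {m : ℕ} (s : Finset (Fin m)) (θ : Fin m → Bool)
    (S : Fin m → X) : ℝ :=
  ⨆ l : ι, ∑ k ∈ s, sgnB (θ k) * f l (S k)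

section SupSum

variable {X ι : Type*} {f : ι → X → ℝ} {a b : ℝ} {m : ℕ}

lemma abs_sgnB_mul_le (ha : a ≤ 0) (hb : 0 < b) {y : ℝ} (hy : y ∈ Set.Icc a b) (β : Bool) :
    |sgnB β * y| ≤ b - a := by
  obtain ⟨h1, h2⟩ := hy
  cases β <;> simp [sgnB, abs_le] <;> constructor <;> linarith

lemma abs_sum_le (ha : a ≤ 0) (hb : 0 < b) (hrange : ∀ l x, f l x ∈ Set.Icc a b)
    (s : Finset (Fin m)) (θ : Fin m → Bool) (S : Fin m → X) (l : ι) :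
    |∑ k ∈ s, sgnB (θ k) * f l (S k)| ≤ s.card * (b - a) := by
  refine (Finset.abs_sum_le_sum_abs _ _).trans ?_
  rw [← nsmul_eq_mul]
  exact Finset.sum_le_card_nsmul _ _ _ fun k _ => abs_sgnB_mul_le ha hb (hrange _ _) _

lemma le_supSum (ha : a ≤ 0) (hb : 0 < b) (hrange : ∀ l x, f l x ∈ Set.Icc a b)
    (s : Finset (Fin m)) (θ : Fin m → Bool) (S : Fin m → X) (l : ι) :
    ∑ k ∈ s, sgnB (θ k) * f l (S k) ≤ supSum f s θ S := by
  refine le_ciSup (f := fun l => ∑ k ∈ s, sgnB (θ k) * f l (S k)) ?_ l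
  refine ⟨s.card * (b - a), ?_⟩
  rintro _ ⟨l, rfl⟩
  exact (le_abs_self _).trans (abs_sum_le ha hb hrange s θ S l)

lemma bddMeas_supSum [MeasurableSpace X] [Countable ι] [Nonempty ι]
    (ha : a ≤ 0) (hb : 0 < b) (hmeas : ∀ l, Measurable (f l))
    (hrange : ∀ l x, f l x ∈ Set.Icc a b) (s : Finset (Fin m)) (θ : Fin m → Bool) :
    BddMeas (supSum f s θ) := by
  refine ⟨Measurable.iSup fun l => Finset.measurable_sum _ fun k _ =>
    ((hmeas l).comp (measurable_pi_apply k)).const_mul _, s.card * (b - a), fun S => ?_⟩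
  have h := fun l => abs_le.1 (abs_sum_le ha hb hrange s θ S l)
  refine abs_le.2 ⟨?_, ciSup_le fun l => (h l).2⟩
  obtain ⟨l⟩ := ‹Nonempty ι›
  exact (h l).1.trans (le_supSum ha hb hrange s θ S l)

lemma supSum_univ_le [Nonempty ι] (ha : a ≤ 0) (hb : 0 < b)
    (hrange : ∀ l x, f l x ∈ Set.Icc a b) (θ : Fin m → Bool) (S : Fin m → X) (i : Fin m) :
    supSum f Finset.univ θ S ≤ supSum f (Finset.univ.erase i) θ S + (b - a) := by
  refine ciSup_le fun l => ?_
  rw [← Finset.sum_erase_add _ _ (Finset.mem_univ i)]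
  exact add_le_add (le_supSum ha hb hrange _ θ S l)
    ((le_abs_self _).trans (abs_sgnB_mul_le ha hb (hrange _ _) _))

/-- Flip the sign with index `i`. -/
def flipAt (i : Fin m) (θ : Fin m → Bool) : Fin m → Bool := Function.update θ i (!θ i)

lemma flipAt_flipAt (i : Fin m) (θ : Fin m → Bool) : flipAt i (flipAt i θ) = θ := by
  simp [flipAt]

/-- Averaging over the sign of the `i`-th point can only increase the supremum (Jensen). -/
lemma two_mul_supSum_erase_le [Nonempty ι] (ha : a ≤ 0) (hb : 0 < b)
    (hrange : ∀ l x, f l x ∈ Set.Icc a b) (θ : Fin m → Bool) (S : Fin m → X) (i : Fin m) :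
    2 * supSum f (Finset.univ.erase i) θ S
      ≤ supSum f Finset.univ θ S + supSum f Finset.univ (flipAt i θ) S := by
  have : supSum f (Finset.univ.erase i) θ S
      ≤ (supSum f Finset.univ θ S + supSum f Finset.univ (flipAt i θ) S) / 2 := by
    refine ciSup_le fun l => ?_
    have h1 := le_supSum ha hb hrange Finset.univ θ S l
    have h2 := le_supSum ha hb hrange Finset.univ (flipAt i θ) S l
    rw [← Finset.sum_erase_add _ _ (Finset.mem_univ i)] at h1 h2
    have h3 : ∑ k ∈ Finset.univ.erase i, sgnB (flipAt i θ k) * f l (S k)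
        = ∑ k ∈ Finset.univ.erase i, sgnB (θ k) * f l (S k) :=
      Finset.sum_congr rfl fun k hk => by
        rw [flipAt, Function.update_of_ne (Finset.ne_of_mem_erase hk)]
    have h4 : sgnB (flipAt i θ i) = - sgnB (θ i) := by
      cases h : θ i <;> simp [flipAt, sgnB, h]
    rw [h3, h4] at h2
    linarith
  linarith

/-- For each fixed `f`, summing over the left-out index counts every point `m - 1` times, so
`(m - 1) sup ≤ ∑ᵢ supᵢ`. -/
lemma sum_sub_supSum_erase_le [Nonempty ι] (ha : a ≤ 0) (hb : 0 < b)
    (hrange : ∀ l x, f l x ∈ Set.Icc a b) (hm : 0 < m) (θ : Fin m → Bool) (S : Fin m → X) :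
    ∑ i, (supSum f Finset.univ θ S - supSum f (Finset.univ.erase i) θ S)
      ≤ supSum f Finset.univ θ S := by
  have hm1 : (0 : ℝ) ≤ m - 1 := by
    have : (1 : ℝ) ≤ m := by exact_mod_cast hm
    linarith
  have key : ((m : ℝ) - 1) * supSum f Finset.univ θ S
      ≤ ∑ i, supSum f (Finset.univ.erase i) θ S := by
    rw [supSum, Real.mul_iSup_of_nonneg hm1]
    refine ciSup_le fun l => ?_
    have h := Finset.sum_le_sum fun i (_ : i ∈ Finset.univ) =>
      le_supSum ha hb hrange (Finset.univ.erase i) θ S l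
    refine le_trans (le_of_eq ?_) h
    have h2 : ∀ i : Fin m, ∑ k ∈ Finset.univ.erase i, sgnB (θ k) * f l (S k)
        = ∑ k, sgnB (θ k) * f l (S k) - sgnB (θ i) * f l (S i) := fun i => by
      rw [← Finset.sum_erase_add _ _ (Finset.mem_univ i)]; ring
    simp only [h2, Finset.sum_sub_distrib, Finset.sum_const, Finset.card_univ, Fintype.card_fin,
      nsmul_eq_mul]
    ring
  simp only [Finset.sum_sub_distrib, Finset.sum_const, Finset.card_univ, Fintype.card_fin,
    nsmul_eq_mul]
  linarith

end SupSum

/-- `(1/c) E_σ sup_{f∈F} ∑_{k∈s} σₖ f(sₖ)`. For `s` the full index set this is `(m/c) R̂(F,S)`. -/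
def avgSup {X ι : Type*} (f : ι → X → ℝ) (c : ℝ) {m : ℕ} (s : Finset (Fin m))
    (S : Fin m → X) : ℝ :=
  (Fintype.card (Fin 1 → Fin m → Bool) * c : ℝ)⁻¹
    * ∑ σ : Fin 1 → Fin m → Bool, supSum f s (σ 0) S

lemma avgSup_univ {X ι : Type*} (f : ι → X → ℝ) (c : ℝ) {m : ℕ} (hm : 0 < m) (S : Fin m → X) :
    avgSup f c Finset.univ S = m / c * era f 1 m S := by
  have hm' : (m : ℝ) ≠ 0 := by exact_mod_cast hm.ne'
  rw [era, radMeasure, PMF.integral_eq_sum]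
  simp only [mcera, PMF.uniformOfFintype_apply, ENNReal.toReal_inv, ENNReal.toReal_natCast,
    smul_eq_mul, Nat.cast_one, inv_one, one_mul, Fin.sum_univ_one]
  simp only [← Real.mul_iSup_of_nonneg (inv_nonneg.2 (Nat.cast_nonneg (α := ℝ) m))]
  rw [avgSup, ← Finset.mul_sum, ← Finset.mul_sum]
  simp only [supSum]
  rw [mul_inv]
  field_simp

theorem stmt_1 {X : Type*} [MeasurableSpace X] {ι : Type*} [Countable ι]
    (f : ι → X → ℝ) (a b : ℝ) (ha : a ≤ 0) (hb : 0 < b)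
    (hmeas : ∀ l : ι, Measurable (f l))
    (hrange : ∀ (l : ι) (x : X), f l x ∈ Set.Icc a b)
    (hzero : ∃ l₀ : ι, ∀ x : X, f l₀ x = 0)
    (μ : Measure X) [IsProbabilityMeasure μ] (m : ℕ) (hm : 0 < m)
    (ε : ℝ) (hε0 : 0 < ε) (hε : ε ≤ rc f 1 m μ) :
    ((Measure.pi fun _ : Fin m => μ)
        {S : Fin m → X | rc f 1 m μ ≥ era f 1 m S + ε}).toReal ≤
      Real.exp (-((m : ℝ) * rc f 1 m μ / (b - a)) * hfun (-ε / rc f 1 m μ)) ∧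
    Real.exp (-((m : ℝ) * rc f 1 m μ / (b - a)) * hfun (-ε / rc f 1 m μ)) ≤
      Real.exp (-((m : ℝ) * ε ^ 2) / (2 * (b - a) * rc f 1 m μ)) := by
  obtain ⟨l₀, -⟩ := hzero
  have : Nonempty ι := ⟨l₀⟩
  have hm' : (0 : ℝ) < m := by exact_mod_cast hm
  have hc : 0 < b - a := by linarith
  set R := rc f 1 m μ with hR
  have hRpos : 0 < R := hε0.trans_le hε
  have hu0 : 0 < ε / R := div_pos hε0 hRpos
  have hu1 : ε / R ≤ 1 := (div_le_one hRpos).2 hε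
  set N : ℝ := (Fintype.card (Fin 1 → Fin m → Bool) : ℝ) with hN
  have hNpos : 0 < N := by rw [hN]; exact_mod_cast Fintype.card_pos
  have hNc : 0 < (N * (b - a))⁻¹ := inv_pos.2 (mul_pos hNpos hc)
  have hbm : ∀ s : Finset (Fin m), BddMeas (avgSup f (b - a) s) := fun s => by
    have h : BddMeas (fun S => ∑ σ : Fin 1 → Fin m → Bool, supSum f s (σ 0) S) := by
      induction (Finset.univ : Finset (Fin 1 → Fin m → Bool)) using Finset.induction_on with
      | empty => simpa using BddMeas.const 0
      | insert σ T hσ ih =>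
        simp only [Finset.sum_insert hσ]
        exact (bddMeas_supSum ha hb hmeas hrange s _).add ih
    exact (BddMeas.const _).mul h
  have hmean : ∫ S, avgSup f (b - a) Finset.univ S ∂(Measure.pi fun _ : Fin m => μ)
      = m * R / (b - a) := by
    simp only [avgSup_univ f (b - a) hm]
    rw [integral_const_mul, hR, rc]
    ring
  have hset : {S : Fin m → X | R ≥ era f 1 m S + ε}
      = {S | avgSup f (b - a) Finset.univ S ≤ m * R / (b - a) * (1 - ε / R)} := by
    ext S
    have e : m * R / (b - a) * (1 - ε / R) = m / (b - a) * (R - ε) := by field_simp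
    simp only [Set.mem_ofPred_eq, avgSup_univ f (b - a) hm]
    rw [e, mul_le_mul_iff_right₀ (div_pos hm' hc)]
    constructor <;> intro h <;> linarith
  constructor
  · have key := selfBounding_lower_tail μ m (avgSup f (b - a) Finset.univ)
      (fun i => avgSup f (b - a) (Finset.univ.erase i)) (hbm _) (fun i => hbm _)
      ?_ ?_ ?_ ?_ hu0 hu1
    · rw [hmean] at key
      rw [hset, neg_div]
      exact key
    · intro i S x
      simp only [avgSup, supSum]
      congr 1
      refine Finset.sum_congr rfl fun σ _ => iSup_congr fun l => Finset.sum_congr rfl fun k hk => ?_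
      rw [Function.update_of_ne (Finset.ne_of_mem_erase hk)]
    · -- pair each sign matrix with the one whose `i`-th sign is flipped
      intro i S
      refine mul_le_mul_of_nonneg_left ?_ hNc.le
      have hflip : ∑ σ : Fin 1 → Fin m → Bool, supSum f Finset.univ (flipAt i (σ 0)) S
          = ∑ σ : Fin 1 → Fin m → Bool, supSum f Finset.univ (σ 0) S := by
        have hinv : Function.Involutive
            (fun (σ : Fin 1 → Fin m → Bool) (j : Fin 1) => flipAt i (σ j)) := fun σ => by
          funext j; exact flipAt_flipAt i (σ j)
        exact Equiv.sum_comp hinv.toPerm (fun σ => supSum f Finset.univ (σ 0) S)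
      have := Finset.sum_le_sum fun (σ : Fin 1 → Fin m → Bool) (_ : σ ∈ Finset.univ) =>
        two_mul_supSum_erase_le ha hb hrange (σ 0) S i
      rw [← Finset.mul_sum, Finset.sum_add_distrib, hflip] at this
      linarith
    · intro i S
      rw [avgSup, avgSup, ← mul_sub, ← Finset.sum_sub_distrib,
        inv_mul_le_iff₀ (mul_pos hNpos hc), mul_one, hN]
      have := Finset.sum_le_card_nsmul (Finset.univ : Finset (Fin 1 → Fin m → Bool))
        (fun σ => supSum f Finset.univ (σ 0) S - supSum f (Finset.univ.erase i) (σ 0) S) (b - a)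
        (fun σ _ => by linarith [supSum_univ_le ha hb hrange (σ 0) S i])
      rwa [nsmul_eq_mul, Finset.card_univ] at this
    · intro S
      simp only [avgSup, ← mul_sub, ← Finset.sum_sub_distrib, ← Finset.mul_sum]
      rw [Finset.sum_comm]
      exact mul_le_mul_of_nonneg_left (Finset.sum_le_sum fun σ _ =>
        sum_sub_supSum_erase_le ha hb hrange hm (σ 0) S) hNc.le
  · refine Real.exp_le_exp.2 ?_
    have h := mul_le_mul_of_nonneg_left (sq_div_two_le_hfun_neg hu0.le hu1)
      (div_pos (mul_pos hm' hRpos) hc).le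
    have e : m * R / (b - a) * ((ε / R) ^ 2 / 2) = m * ε ^ 2 / (2 * (b - a) * R) := by
      field_simp
    rw [e] at h
    rw [neg_div R ε, neg_div, neg_mul]
    exact neg_le_neg h
end
end

section
/- Fix a sample S = (s_1,…,s_m) and assume ẑ(S) ≤ 1/2. Define g : {−1,1}^{n×m} → ℝ by g(σ) = n m R̂ⁿ_m(F,S,σ) = Σ_{j=1}^n sup_{f∈F} Σ_{i=1}^m σ_{j,i} f(s_i), and for each pair (j,i) define g_{j,i}(σ) as the infimum over σ'_{j,i} ∈ {−1,1} of g evaluated at σ with its (j,i)-entry replaced by σ'_{j,i}. Then for every σ ∈ {−1,1}^{n×m} and every (j,i): 0 ≤ g(σ) − g_{j,i}(σ) ≤ 1, and Σ_{j=1}^n Σ_{i=1}^m ( g(σ) − g_{j,i}(σ) ) ≤ g(σ) + n m ν̂_F(S). That is, g is a (1, n m ν̂_F(S))-self-bounding function. -/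
/-!
Write `row(τ) = sup_f Σ_i τ_i f(s_i)` for a single row of signs, so that `g(σ) = Σ_j row(σ_j)`.
Changing the entry `(j,i)` only affects the `j`-th row, hence `g(σ) - g_{j,i}(σ)` is the drop of
`row` at `σ_j` when its `i`-th sign is set to the value minimizing `row`. As `|f(s_i)| ≤ 1/2`,
changing one sign moves `row` by at most `1` (`rowSup_le_update_add_one`). For the sum over `i`,
take an `f` attaining `row(σ_j)` up to `ε`: the same `f` tested against the modified signs shows
that the `i`-th drop is at most `ε + 2 (σ_{j,i} f(s_i))⁺ = ε + σ_{j,i} f(s_i) + |f(s_i)|`, and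
summing over `i` gives at most `m ε + row(σ_j) + sup_f Σ_i |f(s_i)|`
(`sum_rowSup_sub_min_le`). Summing over the rows `j` concludes.
-/

open MeasureTheory

noncomputable section

/-- The contribution of one row of signs to `gup`: `sup_l Σ_k τ_k u_{l,k}`. -/
def rowSup {ι : Type*} {m : ℕ} (u : ι → Fin m → ℝ) (τ : Fin m → Bool) : ℝ :=
  ⨆ l : ι, ∑ k : Fin m, sgnB (τ k) * u l k

lemma abs_sgnB_mul (x : Bool) (y : ℝ) : |sgnB x * y| = |y| := by
  cases x <;> simp [sgnB]

lemma sum_abs_le {ι : Type*} {m : ℕ} {u : ι → Fin m → ℝ} (hu : ∀ l k, |u l k| ≤ 1 / 2) (l : ι) :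
    ∑ k, |u l k| ≤ (m : ℝ) * (1 / 2) := by
  calc ∑ k, |u l k| ≤ ∑ _k : Fin m, (1 / 2 : ℝ) := Finset.sum_le_sum fun k _ => hu l k
    _ = (m : ℝ) * (1 / 2) := by simp

lemma bddAbove_row {ι : Type*} {m : ℕ} {u : ι → Fin m → ℝ} (hu : ∀ l k, |u l k| ≤ 1 / 2)
    (τ : Fin m → Bool) : BddAbove (Set.range fun l => ∑ k, sgnB (τ k) * u l k) := by
  refine ⟨(m : ℝ) * (1 / 2), ?_⟩
  rintro _ ⟨l, rfl⟩
  refine le_trans (Finset.sum_le_sum fun k _ => ?_) (sum_abs_le hu l)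
  exact (le_abs_self _).trans (abs_sgnB_mul _ _).le

lemma sum_update_sign {m : ℕ} (w : Fin m → ℝ) (τ : Fin m → Bool) (i : Fin m) (x : Bool) :
    ∑ k, sgnB (Function.update τ i x k) * w k
      = ∑ k, sgnB (τ k) * w k - sgnB (τ i) * w i + sgnB x * w i := by
  rw [← Finset.add_sum_erase _ _ (Finset.mem_univ i),
    ← Finset.add_sum_erase Finset.univ (fun k => sgnB (τ k) * w k) (Finset.mem_univ i)]
  have h : ∑ k ∈ Finset.univ.erase i, sgnB (Function.update τ i x k) * w k
      = ∑ k ∈ Finset.univ.erase i, sgnB (τ k) * w k :=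
    Finset.sum_congr rfl fun k hk => by
      rw [Function.update_of_ne (Finset.ne_of_mem_erase hk)]
  rw [h, Function.update_self]
  ring

lemma rowSup_le_update_add_one {ι : Type*} [Nonempty ι] {m : ℕ} {u : ι → Fin m → ℝ}
    (hu : ∀ l k, |u l k| ≤ 1 / 2) (τ : Fin m → Bool) (i : Fin m) (x : Bool) :
    rowSup u τ ≤ rowSup u (Function.update τ i x) + 1 := by
  refine ciSup_le fun l => ?_
  have h1 := le_ciSup (bddAbove_row hu (Function.update τ i x)) l
  have h2 : ∑ k, sgnB (Function.update τ i x k) * u l k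
      ≤ rowSup u (Function.update τ i x) := h1
  rw [sum_update_sign] at h2
  have h3 := (abs_le.mp ((abs_sgnB_mul (τ i) (u l i)).le.trans (hu l i))).2
  have h4 := (abs_le.mp ((abs_sgnB_mul x (u l i)).le.trans (hu l i))).1
  linarith

lemma min_rowSup_le {ι : Type*} {m : ℕ} (u : ι → Fin m → ℝ) (τ : Fin m → Bool) (i : Fin m) :
    min (rowSup u (Function.update τ i true)) (rowSup u (Function.update τ i false))
      ≤ rowSup u τ := by
  have h : Function.update τ i (τ i) = τ := Function.update_eq_self i τ
  rcases hx : τ i with _ | _ <;> rw [hx] at h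
  · exact (min_le_right _ _).trans (by rw [h])
  · exact (min_le_left _ _).trans (by rw [h])

/-- The self-bounding inequality for a single row, by testing a near-maximizer of `rowSup u τ`
against each of the modified sign vectors. -/
lemma sum_rowSup_sub_min_le {ι : Type*} [Nonempty ι] {m : ℕ} {u : ι → Fin m → ℝ}
    (hu : ∀ l k, |u l k| ≤ 1 / 2) (τ : Fin m → Bool) :
    ∑ i, (rowSup u τ
        - min (rowSup u (Function.update τ i true)) (rowSup u (Function.update τ i false)))
      ≤ rowSup u τ + ⨆ l, ∑ k, |u l k| := by
  refine le_of_forall_pos_le_add fun δ hδ => ?_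
  -- The error `ε` is incurred once per coordinate, and `m * ε ≤ δ`.
  set ε : ℝ := δ / (m + 1) with hε
  have hεpos : 0 < ε := by positivity
  have hmε : (m : ℝ) * ε ≤ δ := by
    have h : ((m : ℝ) + 1) * ε = δ := by rw [hε]; field_simp
    linarith
  obtain ⟨l, hl⟩ := exists_lt_of_lt_ciSup (show rowSup u τ - ε < rowSup u τ by linarith)
  have hterm : ∀ i, rowSup u τ
      - min (rowSup u (Function.update τ i true)) (rowSup u (Function.update τ i false))
      ≤ ε + (sgnB (τ i) * u l i + |u l i|) := by
    intro i
    have key : ∀ x, rowSup u τ - ε - (sgnB (τ i) * u l i + |u l i|)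
        ≤ rowSup u (Function.update τ i x) := by
      intro x
      have h2 : ∑ k, sgnB (Function.update τ i x k) * u l k
          ≤ rowSup u (Function.update τ i x) :=
        le_ciSup (bddAbove_row hu (Function.update τ i x)) l
      rw [sum_update_sign] at h2
      have h4 := (abs_le.mp (abs_sgnB_mul x (u l i)).le).1
      linarith
    have := le_min (key true) (key false)
    linarith
  have hbdd : BddAbove (Set.range fun l => ∑ k, |u l k|) :=
    ⟨(m : ℝ) * (1 / 2), by rintro _ ⟨l, rfl⟩; exact sum_abs_le hu l⟩
  have h1 : ∑ k, |u l k| ≤ ⨆ l, ∑ k, |u l k| := le_ciSup hbdd l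
  have h2 : ∑ k, sgnB (τ k) * u l k ≤ rowSup u τ := le_ciSup (bddAbove_row hu τ) l
  have h3 := Finset.sum_le_sum fun i (_ : i ∈ Finset.univ) => hterm i
  rw [Finset.sum_add_distrib, Finset.sum_add_distrib (f := fun i => sgnB (τ i) * u l i),
    Finset.sum_const, Finset.card_univ, Fintype.card_fin, nsmul_eq_mul] at h3
  linarith

lemma gup_update {X ι : Type*} (f : ι → X → ℝ) {n m : ℕ} (S : Fin m → X)
    (σ : Fin n → Fin m → Bool) (j : Fin n) (ρ : Fin m → Bool) :
    gup f S (Function.update σ j ρ)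
      = (gup f S σ - rowSup (fun l k => f l (S k)) (σ j))
        + rowSup (fun l k => f l (S k)) ρ := by
  have h : ∀ σ' : Fin n → Fin m → Bool,
      gup f S σ' = ∑ j, rowSup (fun l k => f l (S k)) (σ' j) := fun _ => rfl
  rw [h, h, ← Finset.add_sum_erase _ _ (Finset.mem_univ j),
    ← Finset.add_sum_erase Finset.univ (fun j => rowSup (fun l k => f l (S k)) (σ j))
      (Finset.mem_univ j)]
  have h' : ∑ k ∈ Finset.univ.erase j,
        rowSup (fun l k => f l (S k)) (Function.update σ j ρ k)
      = ∑ k ∈ Finset.univ.erase j, rowSup (fun l k => f l (S k)) (σ k) :=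
    Finset.sum_congr rfl fun k hk => by
      rw [Function.update_of_ne (Finset.ne_of_mem_erase hk)]
  rw [h', Function.update_self]
  ring

lemma gup_sub_gji {X ι : Type*} (f : ι → X → ℝ) {n m : ℕ} (S : Fin m → X)
    (σ : Fin n → Fin m → Bool) (j : Fin n) (i : Fin m) :
    gup f S σ - gji f S σ j i = rowSup (fun l k => f l (S k)) (σ j)
      - min (rowSup (fun l k => f l (S k)) (Function.update (σ j) i true))
          (rowSup (fun l k => f l (S k)) (Function.update (σ j) i false)) := by
  rw [gji, gup_update, gup_update, min_add_add_left]
  ring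

theorem stmt_3 {X : Type*} [MeasurableSpace X] {ι : Type*} [Countable ι]
    (f : ι → X → ℝ) (a b : ℝ) (ha : a ≤ 0) (hb : 0 < b)
    (hmeas : ∀ l : ι, Measurable (f l))
    (hrange : ∀ (l : ι) (x : X), f l x ∈ Set.Icc a b)
    (hzero : ∃ l₀ : ι, ∀ x : X, f l₀ x = 0)
    (n m : ℕ) (S : Fin m → X) (hzh : zhat f S ≤ 1 / 2) :
    (∀ (σ : Fin n → Fin m → Bool) (j : Fin n) (i : Fin m),
        0 ≤ gup f S σ - gji f S σ j i ∧ gup f S σ - gji f S σ j i ≤ 1) ∧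
    ∀ σ : Fin n → Fin m → Bool,
      ∑ j : Fin n, ∑ i : Fin m, (gup f S σ - gji f S σ j i) ≤
        gup f S σ + (n : ℝ) * (m : ℝ) * nuhat f S := by
  obtain ⟨l₀, -⟩ := hzero
  have : Nonempty ι := ⟨l₀⟩
  have hu : ∀ (l : ι) (k : Fin m), |f l (S k)| ≤ 1 / 2 := by
    intro l k
    -- The bounds `a`, `b` make the supremum in `zhat` a genuine one.
    have hbdd : BddAbove (Set.range fun p : ι × Fin m => |f p.1 (S p.2)|) := by
      refine ⟨max |a| |b|, ?_⟩
      rintro _ ⟨p, rfl⟩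
      exact abs_le_max_abs_abs (hrange _ _).1 (hrange _ _).2
    exact (le_ciSup hbdd (l, k)).trans hzh
  refine ⟨fun σ j i => ?_, fun σ => ?_⟩
  · rw [gup_sub_gji]
    refine ⟨sub_nonneg.mpr (min_rowSup_le _ _ _), ?_⟩
    rw [sub_le_iff_le_add, add_comm, ← min_add_add_right]
    exact le_min (rowSup_le_update_add_one hu _ _ _) (rowSup_le_update_add_one hu _ _ _)
  · -- For `m = 0` the factor `m * m⁻¹` is `0`, but then the supremum vanishes as well.
    have hnu : (m : ℝ) * nuhat f S = ⨆ l : ι, ∑ k : Fin m, |f l (S k)| := by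
      rcases Nat.eq_zero_or_pos m with rfl | hm
      · simp
      · have : (m : ℝ) ≠ 0 := by positivity
        rw [nuhat, mul_inv_cancel_left₀ this]
    calc ∑ j : Fin n, ∑ i : Fin m, (gup f S σ - gji f S σ j i)
        ≤ ∑ j : Fin n, (rowSup (fun l k => f l (S k)) (σ j)
            + ⨆ l : ι, ∑ k : Fin m, |f l (S k)|) := by
          refine Finset.sum_le_sum fun j _ => ?_
          simp only [gup_sub_gji]
          exact sum_rowSup_sub_min_le hu (σ j)
      _ = gup f S σ + (n : ℝ) * (m : ℝ) * nuhat f S := by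
          rw [Finset.sum_add_distrib, Finset.sum_const, Finset.card_univ, Fintype.card_fin,
            nsmul_eq_mul, mul_assoc, hnu]
          rfl
end
end
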